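/- Let p > 2 and let (w_m)_{m∈ℕ} be a sequence in (0,1] with w_m → 0, and for each n ∈ ℕ let Y_n be the corresponding space on (ℕ×ℕ)^n. Let Z = (Σ_n Y_n)_{ℓ_p} be the space of all sequences (x^{(n)})_{n∈ℕ} with x^{(n)} ∈ Y_n and norm ‖(x^{(n)})‖ = (Σ_n ‖x^{(n)}‖_{Y_n}^p)^{1/p} < ∞. Then Z is not isomorphic to a subspace of L_p[0,1]: there exist no bounded linear map T : Z → L_p([0,1]) and constant c > 0 with ‖Tx‖_{L_p} ≥ c‖x‖_Z for all x ∈ Z. -/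

import Mathlib

open scoped ENNReal
open MeasureTheory Filter

noncomputable section

variable {α : Type*}

/-- `P` is a partition of the type `α`: a collection of pairwise disjoint
nonempty subsets of `α` whose union is all of `α`. -/
def IsPartition (P : Set (Set α)) : Prop :=
  (∀ N ∈ P, N.Nonempty) ∧ P.PairwiseDisjoint id ∧ ⋃₀ P = Set.univ

/-- A weight function takes values in `(0,1]`. -/
def IsWeight (W : α → ℝ) : Prop := ∀ a, W a ∈ Set.Ioc (0 : ℝ) 1

/-- `‖x‖_{P,W} = (Σ_{N∈P} (Σ_{j∈N} x_j² w_j²)^{p/2})^{1/p}`, valued in `[0,∞]`. -/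
def pwNorm (p : ℝ) (P : Set (Set α)) (W : α → ℝ) (x : α → ℝ) : ℝ≥0∞ :=
  (∑' N : P, (∑' j : N.1, ENNReal.ofReal ((x j.1) ^ 2 * (W j.1) ^ 2)) ^ (p / 2)) ^ (1 / p)

/-- A partition–weight pair on `α`. -/
abbrev PWPair (α : Type*) := Set (Set α) × (α → ℝ)

/-- Every member of the family is a genuine partition–weight pair. -/
def IsPWFamily (𝒞 : Set (PWPair α)) : Prop :=
  ∀ PW ∈ 𝒞, IsPartition PW.1 ∧ IsWeight PW.2

/-- `‖x‖_𝒞 = sup_{(P,W) ∈ 𝒞} ‖x‖_{P,W}`. -/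
def famNorm (p : ℝ) (𝒞 : Set (PWPair α)) (x : α → ℝ) : ℝ≥0∞ :=
  ⨆ PW ∈ 𝒞, pwNorm p PW.1 PW.2 x

/-- The index set `(ℕ×ℕ)^n`. -/
abbrev BIdx (n : ℕ) := Fin n → ℕ × ℕ

/-- The partition `P_I` of `(ℕ×ℕ)^n` into the sets obtained by fixing the coordinates
`i_k` for `k ∈ I` and letting the others range over all of `ℕ × ℕ`. -/
def PI {n : ℕ} (I : Finset (Fin n)) : Set (Set (BIdx n)) :=
  {S | ∃ g : Fin n → ℕ × ℕ, S = {i : BIdx n | ∀ k ∈ I, i k = g k}}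

/-- The weight `W_I(i) = Π_{k∉I} w_{i_k}`, where `w_{(m,l)} = w_m`. -/
def WI (w : ℕ → ℝ) {n : ℕ} (I : Finset (Fin n)) : BIdx n → ℝ :=
  fun i => ∏ k ∈ Iᶜ, w (i k).1

/-- The family of partition–weight pairs `{(P_I, W_I) : I ⊆ {1,…,n}}` defining `Y_n`. -/
def famYn (w : ℕ → ℝ) (n : ℕ) : Set (PWPair (BIdx n)) :=
  Set.range fun I : Finset (Fin n) => (PI I, WI w I)

/-- The norm of `Y_n`:  `max_{I ⊆ {1,…,n}} ‖x‖_{P_I,W_I}`. -/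
def Ynorm (p : ℝ) (w : ℕ → ℝ) (n : ℕ) (x : BIdx n → ℝ) : ℝ≥0∞ :=
  famNorm p (famYn w n) x

/-- The norm of the `ℓ_p`-sum `Z = (Σ_n Y_n)_{ℓ_p}`. -/
def Znorm (p : ℝ) (w : ℕ → ℝ) (x : ∀ n : ℕ, BIdx n → ℝ) : ℝ≥0∞ :=
  (∑' n : ℕ, (Ynorm p w n (x n)) ^ p) ^ (1 / p)

/-- Minkowski's inequality for sums with values in `[0,∞]`. -/
theorem ENNReal_tsum_Lp_add_le {ι : Type*} {p : ℝ} (hp : 1 ≤ p) (f g : ι → ℝ≥0∞) :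
    (∑' a, (f a + g a) ^ p) ^ (1 / p) ≤
      (∑' a, f a ^ p) ^ (1 / p) + (∑' a, g a ^ p) ^ (1 / p) := by
  let _ : MeasurableSpace ι := ⊤
  have h := ENNReal.lintegral_Lp_add_le (μ := Measure.count) (f := f) (g := g)
    (measurable_from_top.aemeasurable) (measurable_from_top.aemeasurable) hp
  simpa only [lintegral_count, Pi.add_apply] using h

theorem ENNReal_rpow_half_rpow {p : ℝ} (s : ℝ≥0∞) :
    (s ^ (1 / (2 : ℝ))) ^ p = s ^ (p / 2) := by
  rw [← ENNReal.rpow_mul]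
  congr 1
  ring

theorem ENNReal_tsum_rpow_le_rpow_tsum {ι : Type*} {q : ℝ} (hq : 1 ≤ q) (f : ι → ℝ≥0∞) :
    ∑' a, f a ^ q ≤ (∑' a, f a) ^ q := by
  have split : ∀ s : ℝ≥0∞, s ^ q = s * s ^ (q - 1) := fun s => by
    conv_rhs => rw [← ENNReal.rpow_one s, ← ENNReal.rpow_mul, one_mul,
      ← ENNReal.rpow_add_of_nonneg _ _ zero_le_one (sub_nonneg.2 hq)]
    congr 1
    ring
  rw [split (∑' a, f a), ← ENNReal.tsum_mul_right]
  refine ENNReal.tsum_le_tsum fun a => ?_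
  rw [split (f a)]
  gcongr
  exact ENNReal.le_tsum a

theorem ENNReal_tsum_cells_le {P : Set (Set α)} (hP : P.PairwiseDisjoint id) (h : α → ℝ≥0∞) :
    ∑' N : P, ∑' j : N.1, h j.1 ≤ ∑' j, h j := by
  rw [← ENNReal.tsum_sigma' (β := fun N : P => N.1) (fun a => h a.2.1)]
  refine ENNReal.tsum_comp_le_tsum_of_injective (f := fun a : Σ N : P, N.1 => a.2.1) ?_ h
  rintro ⟨⟨A, hA⟩, ⟨a, ha⟩⟩ ⟨⟨B, hB⟩, ⟨b, hb⟩⟩ hab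
  obtain rfl : a = b := hab
  obtain rfl : A = B := hP.elim_set hA hB a ha hb
  rfl

theorem ENNReal_rpow_tsum_of_subsingleton_support {ι : Type*} {q : ℝ} (hq : 0 < q)
    (f : ι → ℝ≥0∞) (hf : (Function.support f).Subsingleton) :
    (∑' a, f a) ^ q = ∑' a, f a ^ q := by
  rcases hf.eq_empty_or_singleton with h | ⟨a, h⟩
  · have h0 : ∀ b, f b = 0 := by simpa [Function.support_eq_empty_iff, funext_iff] using h
    simp [h0, hq]
  · have h0 : ∀ b, b ≠ a → f b = 0 := fun b hb => by
      by_contra hne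
      have : b ∈ Function.support f := hne
      rw [h] at this
      exact hb this
    rw [tsum_eq_single a h0, tsum_eq_single a fun b hb => by simp [h0 b hb, hq]]

theorem pwNorm_add_le {p : ℝ} (hp : 1 ≤ p) (P : Set (Set α)) (W x y : α → ℝ) :
    pwNorm p P W (x + y) ≤ pwNorm p P W x + pwNorm p P W y := by
  unfold pwNorm
  simp only [← ENNReal_rpow_half_rpow (p := p)]
  refine le_trans ?_ (ENNReal_tsum_Lp_add_le hp _ _)
  gcongr with N
  have h := ENNReal_tsum_Lp_add_le one_le_two
    (fun j : N.1 => ENNReal.ofReal |x j.1 * W j.1|) (fun j => ENNReal.ofReal |y j.1 * W j.1|)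
  have sq : ∀ t : ℝ, ENNReal.ofReal |t| ^ (2 : ℝ) = ENNReal.ofReal (t ^ 2) := fun t => by
    rw [ENNReal.ofReal_rpow_of_nonneg (abs_nonneg _) zero_le_two, Real.rpow_two, sq_abs]
  simp only [sq, mul_pow] at h
  refine le_trans ?_ h
  gcongr with j
  rw [← mul_pow, ← sq, ← ENNReal.ofReal_add (abs_nonneg _) (abs_nonneg _)]
  gcongr
  rw [Pi.add_apply, add_mul]
  exact abs_add_le _ _

theorem pwNorm_zero {p : ℝ} (hp : 0 < p) (P : Set (Set α)) (W : α → ℝ) :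
    pwNorm p P W 0 = 0 := by
  simp [pwNorm, hp]

theorem pwNorm_sum_le {ι : Type*} {p : ℝ} (hp : 1 ≤ p) (P : Set (Set α)) (W : α → ℝ)
    (s : Finset ι) (x : ι → α → ℝ) :
    pwNorm p P W (∑ k ∈ s, x k) ≤ ∑ k ∈ s, pwNorm p P W (x k) := by
  classical
  induction s using Finset.induction_on with
  | empty => simp [pwNorm_zero (by linarith : 0 < p)]
  | insert k s hk ih =>
    rw [Finset.sum_insert hk, Finset.sum_insert hk]
    exact (pwNorm_add_le hp P W _ _).trans (by gcongr)

theorem pwNorm_smul_of_sq_eq_one {p r : ℝ} (hr : r ^ 2 = 1) (P : Set (Set α))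
    (W x : α → ℝ) : pwNorm p P W (r • x) = pwNorm p P W x := by
  simp [pwNorm, mul_pow, hr]

/-- For `p ≥ 2` every partition norm is dominated by the weighted `ℓ_2` norm. -/
theorem pwNorm_le_rpow_tsum {p : ℝ} (hp : 2 ≤ p) {P : Set (Set α)}
    (hP : P.PairwiseDisjoint id) (W x : α → ℝ) :
    pwNorm p P W x ≤ (∑' j, ENNReal.ofReal (x j ^ 2 * W j ^ 2)) ^ (1 / (2 : ℝ)) := by
  have h : (∑' N : P, (∑' j : N.1, ENNReal.ofReal (x j.1 ^ 2 * W j.1 ^ 2)) ^ (p / 2)) ≤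
      (∑' j, ENNReal.ofReal (x j ^ 2 * W j ^ 2)) ^ (p / 2) := by
    refine (ENNReal_tsum_rpow_le_rpow_tsum (by linarith) _).trans ?_
    gcongr
    exact ENNReal_tsum_cells_le hP fun j => ENNReal.ofReal (x j ^ 2 * W j ^ 2)
  calc pwNorm p P W x ≤ ((∑' j, ENNReal.ofReal (x j ^ 2 * W j ^ 2)) ^ (p / 2)) ^ (1 / p) := by
        unfold pwNorm
        gcongr
    _ = _ := by
        rw [← ENNReal.rpow_mul]
        congr 1
        field_simp

/-- A partition norm is the weighted `ℓ_p` norm on vectors whose support meets each cell at most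
once. -/
theorem pwNorm_le_of_cells_subsingleton {p : ℝ} (hp : 0 < p) {P : Set (Set α)}
    (hP : P.PairwiseDisjoint id) (W x : α → ℝ)
    (hx : ∀ N ∈ P, (N ∩ Function.support x).Subsingleton) :
    pwNorm p P W x ≤ (∑' j, ENNReal.ofReal (x j ^ 2 * W j ^ 2) ^ (p / 2)) ^ (1 / p) := by
  unfold pwNorm
  gcongr
  refine le_trans (ENNReal.tsum_le_tsum fun N => ?_)
    (ENNReal_tsum_cells_le hP fun j => ENNReal.ofReal (x j ^ 2 * W j ^ 2) ^ (p / 2))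
  refine (ENNReal_rpow_tsum_of_subsingleton_support (half_pos hp) _ ?_).le
  intro a ha b hb
  have mem : ∀ c : N.1, c ∈ Function.support
      (fun j : N.1 => ENNReal.ofReal (x j.1 ^ 2 * W j.1 ^ 2)) → x c.1 ≠ 0 := by
    intro c hc h0
    exact hc (by simp [h0])
  exact Subtype.ext (hx N.1 N.2 ⟨a.2, mem a ha⟩ ⟨b.2, mem b hb⟩)

theorem PI_pairwiseDisjoint {n : ℕ} (I : Finset (Fin n)) :
    (PI I).PairwiseDisjoint id := by
  rintro _ ⟨g, rfl⟩ _ ⟨h, rfl⟩ hne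
  refine Set.disjoint_left.2 fun i hg hh => hne ?_
  ext j
  have : ∀ k ∈ I, g k = h k := fun k hk => (hg k hk).symm.trans (hh k hk)
  exact forall₂_congr fun k hk => by rw [this k hk]

theorem Ynorm_eq_iSup (p : ℝ) (w : ℕ → ℝ) (n : ℕ) (x : BIdx n → ℝ) :
    Ynorm p w n x = ⨆ I : Finset (Fin n), pwNorm p (PI I) (WI w I) x := by
  simp only [Ynorm, famNorm, famYn, iSup_range]

theorem Znorm_single {p : ℝ} (hp : 0 < p) (w : ℕ → ℝ) (n : ℕ) (x : BIdx n → ℝ) :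
    Znorm p w (Pi.single n x) = Ynorm p w n x := by
  rw [Znorm, tsum_eq_single n]
  · rw [Pi.single_eq_same, ← ENNReal.rpow_mul, mul_one_div_cancel hp.ne', ENNReal.rpow_one]
  · intro k hk
    simp [Pi.single_eq_of_ne hk, Ynorm_eq_iSup, pwNorm_zero hp, hp]

/-- A pointwise form of one of Clarkson's inequalities. -/
theorem two_mul_rpow_add_rpow_le {p : ℝ} (hp : 2 ≤ p) (a b : ℝ) :
    2 * (|a| ^ p + |b| ^ p) ≤ |a + b| ^ p + |a - b| ^ p := by
  have hq : 1 ≤ p / 2 := by linarith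
  have key : ∀ t : ℝ, |t| ^ p = (t ^ 2) ^ (p / 2) := fun t => by
    rw [← sq_abs, ← Real.rpow_natCast, ← Real.rpow_mul (abs_nonneg t)]
    congr 1
    push_cast
    ring
  simp only [key]
  have convex := (convexOn_rpow hq).2 (sq_nonneg (a + b)) (sq_nonneg (a - b))
    (by norm_num : (0 : ℝ) ≤ 1 / 2) (by norm_num : (0 : ℝ) ≤ 1 / 2) (by norm_num)
  have mean : 1 / 2 * (a + b) ^ 2 + 1 / 2 * (a - b) ^ 2 = a ^ 2 + b ^ 2 := by ring
  simp only [smul_eq_mul, mean] at convex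
  have superadd := Real.add_rpow_le_rpow_add (sq_nonneg a) (sq_nonneg b) hq
  linarith

theorem Lp_ofReal_norm_rpow {X : Type*} [MeasurableSpace X] {μ : Measure X} {p : ℝ} (hp : 0 < p)
    [Fact (1 ≤ ENNReal.ofReal p)] (f : Lp ℝ (ENNReal.ofReal p) μ) : ENNReal.ofReal (‖f‖ ^ p) =
      ∫⁻ t, ENNReal.ofReal (|f t| ^ p) ∂μ := by
  rw [← ENNReal.ofReal_rpow_of_nonneg (norm_nonneg f) hp.le, ofReal_norm, Lp.enorm_def,
    eLpNorm_eq_lintegral_rpow_enorm_toReal (by simpa using hp) ENNReal.ofReal_ne_top,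
    ENNReal.toReal_ofReal hp.le, ← ENNReal.rpow_mul, one_div_mul_cancel hp.ne', ENNReal.rpow_one]
  refine lintegral_congr fun t => ?_
  rw [← ENNReal.ofReal_rpow_of_nonneg (abs_nonneg _) hp.le, ← Real.norm_eq_abs,
    ofReal_norm]

theorem Lp_two_mul_norm_rpow_add_le {X : Type*} [MeasurableSpace X] {μ : Measure X} {p : ℝ}
    (hp : 2 ≤ p) [Fact (1 ≤ ENNReal.ofReal p)] (f g : Lp ℝ (ENNReal.ofReal p) μ) :
    2 * (‖f‖ ^ p + ‖g‖ ^ p) ≤ ‖f + g‖ ^ p + ‖f - g‖ ^ p := by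
  have hp0 : 0 < p := by linarith
  rw [← ENNReal.ofReal_le_ofReal_iff (by positivity), ENNReal.ofReal_mul zero_le_two,
    ENNReal.ofReal_add (by positivity) (by positivity),
    ENNReal.ofReal_add (by positivity) (by positivity)]
  simp only [Lp_ofReal_norm_rpow hp0]
  have meas : ∀ h : Lp ℝ (ENNReal.ofReal p) μ,
      AEMeasurable (fun t => ENNReal.ofReal (|h t| ^ p)) μ := fun h => by
    have := (Lp.aestronglyMeasurable h).aemeasurable
    fun_prop
  rw [← lintegral_add_left' (meas _), ← lintegral_add_left' (meas _),
    ← lintegral_const_mul' _ _ ENNReal.ofReal_ne_top]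
  refine lintegral_mono_ae ?_
  filter_upwards [Lp.coeFn_add f g, Lp.coeFn_sub f g] with t hadd hsub
  rw [hadd, hsub, ← ENNReal.ofReal_add (by positivity) (by positivity),
    ← ENNReal.ofReal_mul zero_le_two, ← ENNReal.ofReal_add (by positivity) (by positivity)]
  exact ENNReal.ofReal_le_ofReal (two_mul_rpow_add_rpow_le hp _ _)

/-- Cotype `p` of `L_p`, in the form of a good choice of signs. -/
theorem Lp_exists_signs {X ι : Type*} [MeasurableSpace X] {μ : Measure X} {p : ℝ}
    (hp : 2 ≤ p) [Fact (1 ≤ ENNReal.ofReal p)] (s : Finset ι)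
    (f : ι → Lp ℝ (ENNReal.ofReal p) μ) :
    ∃ ε : ι → ℝ, (∀ k, ε k ^ 2 = 1) ∧ ∑ k ∈ s, ‖f k‖ ^ p ≤ ‖∑ k ∈ s, ε k • f k‖ ^ p := by
  classical
  induction s using Finset.induction_on with
  | empty => exact ⟨fun _ => 1, by simp, by simpa using Real.rpow_nonneg le_rfl p⟩
  | insert j s hj ih =>
    obtain ⟨ε, hε, hle⟩ := ih
    have clarkson := Lp_two_mul_norm_rpow_add_le hp (∑ k ∈ s, ε k • f k) (f j)
    have extend : ∀ r : ℝ, r ^ 2 = 1 →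
        ‖f j‖ ^ p + ∑ k ∈ s, ‖f k‖ ^ p ≤ ‖(∑ k ∈ s, ε k • f k) + r • f j‖ ^ p →
        ∃ ε : ι → ℝ, (∀ k, ε k ^ 2 = 1) ∧
          ∑ k ∈ insert j s, ‖f k‖ ^ p ≤ ‖∑ k ∈ insert j s, ε k • f k‖ ^ p := by
      intro r hr h
      refine ⟨Function.update ε j r, fun k => ?_, ?_⟩
      · rcases eq_or_ne k j with rfl | hk
        · simpa using hr
        · simpa [hk] using hε k
      · rw [Finset.sum_insert hj, Finset.sum_insert hj, Function.update_self, add_comm (r • f j)]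
        refine h.trans_eq ?_
        congr 3
        refine Finset.sum_congr rfl fun k hk => ?_
        rw [Function.update_of_ne (ne_of_mem_of_not_mem hk hj)]
    rcases le_or_gt (‖f j‖ ^ p + ∑ k ∈ s, ‖f k‖ ^ p) (‖(∑ k ∈ s, ε k • f k) + f j‖ ^ p) with h | h
    · exact extend 1 (by norm_num) (by simpa using h)
    · refine extend (-1) (by norm_num) ?_
      rw [neg_smul, one_smul, ← sub_eq_add_neg]
      linarith

/-- The point `(m,l)` on the `k`-th axis through the base point `((m,0),…,(m,0))`. -/
def axisPt {n : ℕ} (m : ℕ) (k : Fin n) (l : ℕ) : BIdx n :=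
  Function.update (fun _ => (m, 0)) k (m, l)

/-- The vector taking the value `a` at the first `N` points of the `k`-th axis. -/
def axisVec {n : ℕ} (m N : ℕ) (a : ℝ) (k : Fin n) : BIdx n → ℝ :=
  fun i => if i ∈ (Finset.range N).image (axisPt m k) then a else 0

theorem axisPt_injective {n : ℕ} (m : ℕ) (k : Fin n) : Function.Injective (axisPt m k) := by
  intro l l' h
  simpa [axisPt] using congrFun h k

theorem WI_axisPt (w : ℕ → ℝ) {n : ℕ} (I : Finset (Fin n)) (m : ℕ) (k : Fin n) (l : ℕ) :
    WI w I (axisPt m k l) = w m ^ Iᶜ.card := by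
  have h : ∀ j, (axisPt m k l j).1 = m := fun j => by
    rcases eq_or_ne j k with rfl | hj <;> simp_all [axisPt]
  simp [WI, h]

theorem axisVec_axisPt {n m N l : ℕ} (hl : l < N) (a : ℝ) (k : Fin n) :
    axisVec m N a k (axisPt m k l) = a :=
  if_pos (Finset.mem_image_of_mem _ (Finset.mem_range.2 hl))

theorem exists_axisPt_of_axisVec_ne_zero {n m N : ℕ} {a : ℝ} {k : Fin n} {i : BIdx n}
    (hi : axisVec m N a k i ≠ 0) : ∃ l < N, axisPt m k l = i := by
  by_contra h
  exact hi (if_neg (by simpa using h))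

theorem tsum_axisVec_le {n : ℕ} (m N : ℕ) (a : ℝ) (k : Fin n) (h : BIdx n → ℝ≥0∞) (b : ℝ≥0∞)
    (h0 : ∀ i, axisVec m N a k i = 0 → h i = 0) (hb : ∀ l < N, h (axisPt m k l) ≤ b) :
    ∑' i, h i ≤ N * b := by
  rw [tsum_eq_sum (s := (Finset.range N).image (axisPt m k))
    fun i hi => h0 i (if_neg hi), Finset.sum_image (axisPt_injective m k).injOn]
  refine (Finset.sum_le_card_nsmul _ _ b fun l hl => hb l (Finset.mem_range.1 hl)).trans ?_
  simp

theorem pwNorm_axisVec_le {p : ℝ} (hp : 2 ≤ p) {w : ℕ → ℝ} (hw : IsWeight w) {n m N : ℕ}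
    {a δ : ℝ} (ha : 0 ≤ a) (haN : N * (a ^ 2 * w m ^ 2) = 1) (hδ : w m ≤ δ)
    (hNδ : N * a ^ p ≤ δ ^ p) (k : Fin n) (I : Finset (Fin n)) :
    pwNorm p (PI I) (WI w I) (axisVec m N a k) ≤
      (if Iᶜ = {k} then 1 else 0) + ENNReal.ofReal δ := by
  have hp0 : 0 < p := by linarith
  obtain ⟨hu0, hu1⟩ := hw m
  have hδ0 : 0 ≤ δ := hu0.le.trans hδ
  by_cases hk : k ∈ I
  · refine le_add_left ?_
    have hcells : ∀ A ∈ PI I, (A ∩ Function.support (axisVec m N a k)).Subsingleton := by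
      rintro _ ⟨g, rfl⟩ i ⟨hi, hi'⟩ j ⟨hj, hj'⟩
      obtain ⟨l, -, rfl⟩ := exists_axisPt_of_axisVec_ne_zero hi'
      obtain ⟨l', -, rfl⟩ := exists_axisPt_of_axisVec_ne_zero hj'
      have h := (hi k hk).trans (hj k hk).symm
      rw [show l = l' by simpa [axisPt] using h]
    refine (pwNorm_le_of_cells_subsingleton hp0 (PI_pairwiseDisjoint I) _ _ hcells).trans ?_
    rw [one_div, ENNReal.rpow_inv_le_iff hp0]
    refine (tsum_axisVec_le m N a k _ (ENNReal.ofReal (a ^ p)) (fun i hi => by simp [hi, hp0])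
      fun l hl => ?_).trans ?_
    · rw [axisVec_axisPt hl, WI_axisPt,
        ENNReal.ofReal_rpow_of_nonneg (by positivity) (by positivity)]
      refine ENNReal.ofReal_le_ofReal ?_
      calc (a ^ 2 * (w m ^ Iᶜ.card) ^ 2) ^ (p / 2) ≤ (a ^ 2) ^ (p / 2) := by
            gcongr
            exact mul_le_of_le_one_right (by positivity)
              (pow_le_one₀ (by positivity) (pow_le_one₀ hu0.le hu1))
        _ = a ^ p := by
            rw [← Real.rpow_natCast, ← Real.rpow_mul ha]
            congr 1
            push_cast
            ring
    · rw [← ENNReal.ofReal_natCast, ← ENNReal.ofReal_mul (by positivity),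
        ENNReal.ofReal_rpow_of_nonneg hδ0 hp0.le]
      exact ENNReal.ofReal_le_ofReal hNδ
  · have hkc : k ∈ Iᶜ := Finset.mem_compl.2 hk
    have main : pwNorm p (PI I) (WI w I) (axisVec m N a k) ≤
        ENNReal.ofReal ((w m ^ (Iᶜ.card - 1)) ^ 2) ^ (1 / (2 : ℝ)) := by
      refine (pwNorm_le_rpow_tsum hp (PI_pairwiseDisjoint I) _ _).trans ?_
      gcongr
      refine (tsum_axisVec_le m N a k _ (ENNReal.ofReal (a ^ 2 * (w m ^ Iᶜ.card) ^ 2))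
        (fun i hi => by simp [hi]) fun l hl => ?_).trans_eq ?_
      · rw [axisVec_axisPt hl, WI_axisPt]
      · rw [← ENNReal.ofReal_natCast, ← ENNReal.ofReal_mul (by positivity)]
        congr 1
        obtain ⟨c, hc⟩ := Nat.exists_eq_succ_of_ne_zero (Finset.card_ne_zero_of_mem hkc)
        rw [hc, Nat.succ_sub_one, Nat.succ_eq_add_one, pow_succ]
        linear_combination (w m ^ c) ^ 2 * haN
    rw [ENNReal.ofReal_rpow_of_nonneg (by positivity) (by positivity), ← Real.sqrt_eq_rpow,
      Real.sqrt_sq (by positivity)] at main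
    refine main.trans ?_
    split_ifs with hI
    · exact le_add_right (by simp [hI])
    · refine le_add_left (ENNReal.ofReal_le_ofReal ?_)
      have hcard : Iᶜ.card - 1 ≠ 0 := by
        intro h
        refine hI (Finset.eq_singleton_iff_unique_mem.2 ⟨hkc, fun j hj => ?_⟩)
        exact Finset.card_le_one.1 (by lia) j hj k hkc
      exact (pow_le_of_le_one hu0.le hu1 hcard).trans hδ

theorem one_le_Ynorm_axisVec {p : ℝ} (hp : 0 < p) {w : ℕ → ℝ} {n m N : ℕ} {a : ℝ}
    (haN : N * (a ^ 2 * w m ^ 2) = 1) (k : Fin n) : 1 ≤ Ynorm p w n (axisVec m N a k) := by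
  rw [Ynorm_eq_iSup]
  refine le_iSup_of_le {k}ᶜ ?_
  rw [pwNorm, one_div, ENNReal.le_rpow_inv_iff hp, ENNReal.one_rpow]
  let A : Set (BIdx n) := {i | ∀ j ∈ ({k}ᶜ : Finset (Fin n)), i j = (m, 0)}
  have hA : A ∈ PI ({k}ᶜ : Finset (Fin n)) := ⟨fun _ => (m, 0), rfl⟩
  refine le_trans ?_ (ENNReal.le_tsum (⟨A, hA⟩ : PI ({k}ᶜ : Finset (Fin n))))
  refine ENNReal.one_le_rpow ?_ (half_pos hp)
  have hmem : ∀ l, axisPt m k l ∈ A := fun l j hj => by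
    have : j ≠ k := by simpa using hj
    simp [axisPt, this]
  have hinj : Function.Injective fun l : Fin N => (⟨axisPt m k l, hmem l⟩ : A) := fun l l' h =>
    Fin.ext (axisPt_injective m k (congrArg Subtype.val h))
  refine le_trans ?_ (ENNReal.tsum_comp_le_tsum_of_injective hinj _)
  simp only [axisVec_axisPt (Fin.is_lt _), WI_axisPt, compl_compl, Finset.card_singleton, pow_one]
  rw [tsum_fintype, Finset.sum_const, Finset.card_univ, Fintype.card_fin, nsmul_eq_mul,
    ← ENNReal.ofReal_natCast, ← ENNReal.ofReal_mul (by positivity), haN, ENNReal.ofReal_one]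

theorem Ynorm_sum_axisVec_le_two {p : ℝ} (hp : 2 ≤ p) {w : ℕ → ℝ} (hw : IsWeight w) {n m N : ℕ}
    {a δ : ℝ} (ha : 0 ≤ a) (haN : N * (a ^ 2 * w m ^ 2) = 1) (hδ : w m ≤ δ)
    (hNδ : N * a ^ p ≤ δ ^ p) (hnδ : n * δ ≤ 1) {ε : Fin n → ℝ} (hε : ∀ k, ε k ^ 2 = 1)
    (s : Finset (Fin n)) : Ynorm p w n (∑ k ∈ s, ε k • axisVec m N a k) ≤ 2 := by
  rw [Ynorm_eq_iSup]
  refine iSup_le fun I => ?_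
  calc pwNorm p (PI I) (WI w I) (∑ k ∈ s, ε k • axisVec m N a k)
      ≤ ∑ k ∈ s, pwNorm p (PI I) (WI w I) (ε k • axisVec m N a k) :=
        pwNorm_sum_le (by linarith) _ _ _ _
    _ ≤ ∑ k, ((if Iᶜ = {k} then 1 else 0) + ENNReal.ofReal δ) := by
        refine (Finset.sum_le_sum fun k _ => ?_).trans
          (Finset.sum_le_sum_of_subset (Finset.subset_univ s))
        rw [pwNorm_smul_of_sq_eq_one (hε k)]
        exact pwNorm_axisVec_le hp hw ha haN hδ hNδ k I
    _ ≤ 1 + 1 := by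
        rw [Finset.sum_add_distrib]
        gcongr
        · by_cases h : ∃ k, Iᶜ = {k}
          · obtain ⟨k, hk⟩ := h
            simp [hk]
          · push Not at h
            simp [h]
        · rw [Finset.sum_const, Finset.card_univ, Fintype.card_fin, nsmul_eq_mul,
            ← ENNReal.ofReal_natCast, ← ENNReal.ofReal_mul (by positivity)]
          exact ENNReal.ofReal_le_one.2 hnδ
    _ = 2 := one_add_one_eq_two

theorem exists_nat_flat_coefficient {p u δ : ℝ} (hp : 2 < p) (hu : 0 < u) (hδ : 0 < δ) :
    ∃ (N : ℕ) (a : ℝ), 0 ≤ a ∧ N * (a ^ 2 * u ^ 2) = 1 ∧ N * a ^ p ≤ δ ^ p := by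
  have hlim := (tendsto_rpow_neg_atTop (by linarith : 0 < p / 2 - 1)).comp
    (tendsto_natCast_atTop_atTop (R := ℝ))
  have hpos : 0 < (δ * u) ^ p := by positivity
  obtain ⟨N, hN, hN1⟩ := ((hlim.eventually_lt_const hpos).and (eventually_ge_atTop 1)).exists
  have hN0 : (0 : ℝ) < N := by exact_mod_cast hN1
  refine ⟨N, 1 / (√N * u), by positivity, ?_, ?_⟩
  · rw [div_pow, mul_pow, Real.sq_sqrt hN0.le]
    field_simp
  · rw [Real.div_rpow zero_le_one (by positivity), Real.one_rpow,
      Real.mul_rpow (by positivity) hu.le, Real.sqrt_eq_rpow, ← Real.rpow_mul hN0.le]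
    rw [Real.mul_rpow hδ.le hu.le] at hN
    have hpow : (N : ℝ) ^ (-(p / 2 - 1)) = N * ((N : ℝ) ^ (1 / 2 * p))⁻¹ := by
      rw [← Real.rpow_neg hN0.le]
      nth_rewrite 2 [← Real.rpow_one (N : ℝ)]
      rw [← Real.rpow_add hN0]
      congr 1
      ring
    simp only [Function.comp_apply, hpow] at hN
    have hup : 0 < u ^ p := by positivity
    calc (N : ℝ) * (1 / ((N : ℝ) ^ (1 / 2 * p) * u ^ p))
        = N * ((N : ℝ) ^ (1 / 2 * p))⁻¹ / u ^ p := by field_simp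
      _ ≤ δ ^ p := (div_le_iff₀ hup).2 hN.le

/-- The `ℓ_p`-sum `Z = (Σ_n Y_n)_{ℓ_p}` is not isomorphic to a
subspace of `L_p[0,1]`: there is no linear map `T : Z → L_p([0,1])` which is bounded
(by some `M`) and bounded below (by some `c > 0`). -/
theorem statement19 (p : ℝ) (hp : 2 < p) [Fact (1 ≤ ENNReal.ofReal p)]
    (w : ℕ → ℝ) (hw : IsWeight w)
    (hw0 : Filter.Tendsto w Filter.atTop (nhds 0)) :
    ¬ ∃ (T : (∀ n : ℕ, BIdx n → ℝ) → MeasureTheory.Lp ℝ (ENNReal.ofReal p)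
        (volume : Measure ↥(Set.Icc (0 : ℝ) 1))) (M c : ℝ), 0 < c ∧
      (∀ x y, Znorm p w x < ⊤ → Znorm p w y < ⊤ → T (x + y) = T x + T y) ∧
      (∀ (r : ℝ) (x), Znorm p w x < ⊤ → T (r • x) = r • T x) ∧
      (∀ x, Znorm p w x < ⊤ →
        ENNReal.ofReal ‖T x‖ ≤ ENNReal.ofReal M * Znorm p w x) ∧
      (∀ x, Znorm p w x < ⊤ →
        ENNReal.ofReal c * Znorm p w x ≤ ENNReal.ofReal ‖T x‖) := by
  rintro ⟨T, M, c, hc, hadd, hsmul, hM, hcT⟩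
  have hp0 : 0 < p := by linarith
  obtain ⟨n, hn⟩ := exists_nat_gt ((2 * |M| / c) ^ p)
  have hn0 : (0 : ℝ) < n := lt_of_le_of_lt (by positivity) hn
  obtain ⟨m, hm⟩ := (hw0.eventually_le_const (inv_pos.2 hn0)).exists
  obtain ⟨N, a, ha, haN, hNδ⟩ := exists_nat_flat_coefficient hp (hw m).1 (inv_pos.2 hn0)
  let X : Fin n → ∀ n : ℕ, BIdx n → ℝ := fun k => Pi.single n (axisVec m N a k)
  have hsum : ∀ (ε : Fin n → ℝ) (s : Finset (Fin n)),
      ∑ k ∈ s, ε k • X k = Pi.single n (∑ k ∈ s, ε k • axisVec m N a k) := by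
    intro ε s
    have h := map_sum (LinearMap.single ℝ (fun n : ℕ => BIdx n → ℝ) n)
      (fun k => ε k • axisVec m N a k) s
    simp only [map_smul, LinearMap.single_apply] at h
    exact h.symm
  have hbound : ∀ (ε : Fin n → ℝ), (∀ k, ε k ^ 2 = 1) → ∀ s : Finset (Fin n),
      Znorm p w (∑ k ∈ s, ε k • X k) ≤ 2 := by
    intro ε hε s
    rw [hsum, Znorm_single hp0]
    exact Ynorm_sum_axisVec_le_two hp.le hw ha haN hm hNδ (mul_inv_cancel₀ hn0.ne').le hε s
  have hfin : ∀ x, Znorm p w x ≤ 2 → Znorm p w x < ⊤ := fun x hx =>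
    hx.trans_lt ENNReal.ofNat_lt_top
  have hX : ∀ k, Znorm p w (X k) ≤ 2 := fun k => by
    simpa using hbound (fun _ => 1) (by simp) {k}
  have hT : ∀ (ε : Fin n → ℝ), (∀ k, ε k ^ 2 = 1) → ∀ s : Finset (Fin n),
      T (∑ k ∈ s, ε k • X k) = ∑ k ∈ s, ε k • T (X k) := by
    intro ε hε s
    induction s using Finset.induction_on with
    | empty =>
      have h := hsmul 0 0 (hfin _ (by simpa using hbound ε hε ∅))
      simpa using h
    | insert j s hj ih =>
      have hj' : Znorm p w (ε j • X j) ≤ 2 := by simpa using hbound ε hε {j}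
      rw [Finset.sum_insert hj, Finset.sum_insert hj, hadd _ _ (hfin _ hj') (hfin _ (hbound ε hε s)),
        hsmul _ _ (hfin _ (hX j)), ih]
  have hlower : ∀ k, c ≤ ‖T (X k)‖ := fun k => by
    have h1 : 1 ≤ Znorm p w (X k) := by
      rw [Znorm_single hp0]
      exact one_le_Ynorm_axisVec hp0 haN k
    rw [← ENNReal.ofReal_le_ofReal_iff (norm_nonneg _)]
    exact (le_mul_of_one_le_right' h1).trans (hcT _ (hfin _ (hX k)))
  obtain ⟨ε, hε, hle⟩ := Lp_exists_signs hp.le Finset.univ fun k => T (X k)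
  rw [← hT ε hε] at hle
  have hupper : ‖T (∑ k, ε k • X k)‖ ≤ 2 * |M| := by
    rw [← ENNReal.ofReal_le_ofReal_iff (by positivity), mul_comm, ENNReal.ofReal_mul (abs_nonneg M)]
    refine (hM _ (hfin _ (hbound ε hε _))).trans ?_
    gcongr
    · exact le_abs_self M
    · simpa using hbound ε hε Finset.univ
  have hcount : n * c ^ p ≤ (2 * |M|) ^ p :=
    calc n * c ^ p = ∑ _k : Fin n, c ^ p := by simp
      _ ≤ ∑ k, ‖T (X k)‖ ^ p := by
          gcongr with k
          exact hlower k
      _ ≤ _ := hle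
      _ ≤ (2 * |M|) ^ p := by gcongr
  rw [Real.div_rpow (by positivity) hc.le, div_lt_iff₀ (by positivity)] at hn
  linarith
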